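/- arXiv:1405.1949 — 4 statements merged into one kernel-verified Lean document; each statement's English description precedes it below -/
import Mathlib

section
/- Let a, b, c be Gaussian integers that are squarefree and pairwise coprime, and let (x, y, z) be a nontrivial Gaussian integer solution of a·x² + b·y² + c·z² = 0 such that the only common divisors of x, y, z are units. Then x and y are coprime, x and z are coprime, and y and z are coprime. -/
local notation "ℤ[i]" => GaussianInt

/-!
If `d` divides both `x` and `y`, then `d ^ 2` divides `c * z ^ 2`. By primitivity `d` is relatively
prime to `z`, so `d ^ 2` divides the squarefree `c` and `d` is a unit. The equation and the
primitivity condition are symmetric in the three terms.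
-/

theorem isUnit_of_sq_dvd_mul_sq {M : Type*} [CommMonoid M] [DecompositionMonoid M] {c d z : M}
    (hc : Squarefree c) (hdz : IsRelPrime d z) (h : d ^ 2 ∣ c * z ^ 2) : IsUnit d := by
  have hdc : d ^ 2 ∣ c := hdz.pow.dvd_of_dvd_mul_right h
  exact hc d (by rwa [← sq])

section CommRing

variable {R : Type*} [CommRing R] {a b c x y z : R}

theorem sq_dvd_mul_sq_of_dvd_of_dvd {d : R} (hsol : a * x ^ 2 + b * y ^ 2 + c * z ^ 2 = 0)
    (hx : d ∣ x) (hy : d ∣ y) : d ^ 2 ∣ c * z ^ 2 := by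
  have hxy : d ^ 2 ∣ a * x ^ 2 + b * y ^ 2 :=
    ((pow_dvd_pow_of_dvd hx 2).mul_left a).add ((pow_dvd_pow_of_dvd hy 2).mul_left b)
  exact (dvd_add_right hxy).mp (hsol ▸ dvd_zero (d ^ 2))

variable [DecompositionMonoid R]

theorem isRelPrime_of_squarefree_of_primitive (hc : Squarefree c)
    (hsol : a * x ^ 2 + b * y ^ 2 + c * z ^ 2 = 0)
    (hprim : ∀ d : R, d ∣ x → d ∣ y → d ∣ z → IsUnit d) : IsRelPrime x y := by
  intro d hx hy
  have hdz : IsRelPrime d z := fun e hed hez => hprim e (hed.trans hx) (hed.trans hy) hez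
  exact isUnit_of_sq_dvd_mul_sq hc hdz (sq_dvd_mul_sq_of_dvd_of_dvd hsol hx hy)

theorem legendre_primitive_pairwise_coprime_general
    (ha : Squarefree a) (hb : Squarefree b) (hc : Squarefree c)
    (hsol : a * x ^ 2 + b * y ^ 2 + c * z ^ 2 = 0)
    (hprim : ∀ d : R, d ∣ x → d ∣ y → d ∣ z → IsUnit d) :
    IsRelPrime x y ∧ IsRelPrime x z ∧ IsRelPrime y z := by
  have hsol_xz : a * x ^ 2 + c * z ^ 2 + b * y ^ 2 = 0 := by linear_combination hsol
  have hsol_yz : b * y ^ 2 + c * z ^ 2 + a * x ^ 2 = 0 := by linear_combination hsol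
  exact ⟨isRelPrime_of_squarefree_of_primitive hc hsol hprim,
    isRelPrime_of_squarefree_of_primitive hb hsol_xz fun d hx hz hy => hprim d hx hy hz,
    isRelPrime_of_squarefree_of_primitive ha hsol_yz fun d hy hz hx => hprim d hx hy hz⟩

end CommRing

/-- A primitive nontrivial solution of the Legendre equation in normal form has pairwise
coprime coordinates. -/
theorem legendre_primitive_pairwise_coprime (a b c x y z : ℤ[i])
    (ha : Squarefree a) (hb : Squarefree b) (hc : Squarefree c)
    (hab : IsCoprime a b) (hac : IsCoprime a c) (hbc : IsCoprime b c)
    (hsol : a * x ^ 2 + b * y ^ 2 + c * z ^ 2 = 0)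
    (hnt : (x, y, z) ≠ (0, 0, 0))
    (hprim : ∀ d : ℤ[i], d ∣ x → d ∣ y → d ∣ z → IsUnit d) :
    IsCoprime x y ∧ IsCoprime x z ∧ IsCoprime y z := by
  simpa only [isRelPrime_iff_isCoprime] using
    legendre_primitive_pairwise_coprime_general ha hb hc hsol hprim
end

section
/- Let a, b, c be pairwise coprime squarefree Gaussian integers, let (x₀, y₀, z₀) be Gaussian integers with a·x₀² + b·y₀² + c·z₀² = 0 and with x₀ and y₀ coprime, let X, Y, Z be Gaussian integers, and let δ be a Gaussian integer dividing both c and X·y₀ − Y·x₀. Then δ divides each of the three Gaussian integers x₀·(a·X² + b·Y² + c·Z²) − 2·X·(a·x₀·X + b·y₀·Y + c·z₀·Z), y₀·(a·X² + b·Y² + c·Z²) − 2·Y·(a·x₀·X + b·y₀·Y + c·z₀·Z), and z₀·(a·X² + b·Y² + c·Z²) − 2·Z·(a·x₀·X + b·y₀·Y + c·z₀·Z). -/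
local notation "ℤ[i]" => GaussianInt

/-!
Modulo `δ` the ternary form reduces to the binary form `a * X ^ 2 + b * Y ^ 2`, which vanishes at
`(x₀, y₀)`, and `(X, Y)` is a multiple of the unimodular vector `(x₀, y₀)`. Hence every linear form
vanishing at `(x₀, y₀)` also vanishes at `(X, Y)`. Applying this to each slot of the associated
bilinear form in turn shows that `(X, Y, Z)` is orthogonal to `(x₀, y₀, z₀)` and isotropic.
-/

section CommRing

variable {R : Type*} [CommRing R] {a b c x y z X Y δ : R}

theorem dvd_mul_add_mul_of_isCoprime (hxy : IsCoprime x y) (hδ : δ ∣ X * y - Y * x)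
    (h : δ ∣ a * x + b * y) : δ ∣ a * X + b * Y := by
  obtain ⟨u, v, huv⟩ := hxy
  have expansion : a * X + b * Y =
      (u * X + v * Y) * (a * x + b * y) + (a * v - b * u) * (X * y - Y * x) := by
    linear_combination -(a * X + b * Y) * huv
  rw [expansion]
  exact (h.mul_left _).add (hδ.mul_left _)

theorem dvd_binary_bilin_of_isCoprime (hxy : IsCoprime x y) (hδ : δ ∣ X * y - Y * x)
    (h : δ ∣ a * x ^ 2 + b * y ^ 2) : δ ∣ a * x * X + b * y * Y :=
  dvd_mul_add_mul_of_isCoprime hxy hδ (by simpa only [sq, mul_assoc] using h)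

theorem dvd_binary_form_of_isCoprime (hxy : IsCoprime x y) (hδ : δ ∣ X * y - Y * x)
    (h : δ ∣ a * x ^ 2 + b * y ^ 2) : δ ∣ a * X ^ 2 + b * Y ^ 2 := by
  have bilin : δ ∣ a * X * x + b * Y * y := by
    simpa only [mul_right_comm] using dvd_binary_bilin_of_isCoprime hxy hδ h
  simpa only [sq, mul_assoc] using dvd_mul_add_mul_of_isCoprime hxy hδ bilin

theorem delta_divides_expressions_general (hxy : IsCoprime x y)
    (hsol : δ ∣ a * x ^ 2 + b * y ^ 2 + c * z ^ 2) (hc : δ ∣ c) (hδ : δ ∣ X * y - Y * x) (Z : R) :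
    δ ∣ x * (a * X ^ 2 + b * Y ^ 2 + c * Z ^ 2) -
        2 * X * (a * x * X + b * y * Y + c * z * Z) ∧
    δ ∣ y * (a * X ^ 2 + b * Y ^ 2 + c * Z ^ 2) -
        2 * Y * (a * x * X + b * y * Y + c * z * Z) ∧
    δ ∣ z * (a * X ^ 2 + b * Y ^ 2 + c * Z ^ 2) -
        2 * Z * (a * x * X + b * y * Y + c * z * Z) := by
  have binary : δ ∣ a * x ^ 2 + b * y ^ 2 := (dvd_add_left (hc.mul_right _)).mp hsol
  have isotropic : δ ∣ a * X ^ 2 + b * Y ^ 2 + c * Z ^ 2 :=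
    (dvd_binary_form_of_isCoprime hxy hδ binary).add (hc.mul_right _)
  have orthogonal : δ ∣ a * x * X + b * y * Y + c * z * Z :=
    (dvd_binary_bilin_of_isCoprime hxy hδ binary).add ((hc.mul_right z).mul_right Z)
  exact ⟨(isotropic.mul_left _).sub (orthogonal.mul_left _),
    (isotropic.mul_left _).sub (orthogonal.mul_left _),
    (isotropic.mul_left _).sub (orthogonal.mul_left _)⟩

end CommRing

/-- If `δ` divides `c` and `X·y₀ − Y·x₀` then it divides the three parametric expressions. -/
theorem delta_divides_expressions (a b c x₀ y₀ z₀ X Y Z δ : ℤ[i])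
    (ha : Squarefree a) (hb : Squarefree b) (hc : Squarefree c)
    (hab : IsCoprime a b) (hac : IsCoprime a c) (hbc : IsCoprime b c)
    (hsol : a * x₀ ^ 2 + b * y₀ ^ 2 + c * z₀ ^ 2 = 0)
    (hxy : IsCoprime x₀ y₀)
    (hδc : δ ∣ c) (hδ : δ ∣ X * y₀ - Y * x₀) :
    δ ∣ x₀ * (a * X ^ 2 + b * Y ^ 2 + c * Z ^ 2) -
        2 * X * (a * x₀ * X + b * y₀ * Y + c * z₀ * Z) ∧
    δ ∣ y₀ * (a * X ^ 2 + b * Y ^ 2 + c * Z ^ 2) -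
        2 * Y * (a * x₀ * X + b * y₀ * Y + c * z₀ * Z) ∧
    δ ∣ z₀ * (a * X ^ 2 + b * Y ^ 2 + c * Z ^ 2) -
        2 * Z * (a * x₀ * X + b * y₀ * Y + c * z₀ * Z) :=
  delta_divides_expressions_general hxy (hsol ▸ dvd_zero δ) hδc hδ Z
end

section
/- Let a, b, c, x₀, y₀, z₀, X, Y, Z be Gaussian integers such that a·b is squarefree and not a unit, c·z₀ ≠ 0, a·x₀² + b·y₀² + c·z₀² = 0, and y₀·X − x₀·Y ≠ 0. Then z₀·(a·X² + b·Y² + c·Z²) − 2·Z·(a·x₀·X + b·y₀·Y + c·z₀·Z) ≠ 0. -/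
local notation "ℤ[i]" => GaussianInt

/-!
Write `P₀ = (x₀, y₀, z₀)`, `P = (X, Y, Z)`, and let `Q` be the quadratic form with diagonal
`(a, b, c)` and `B` its bilinear form. The expression in the theorem is the `z`-coordinate of
`Q(P) P₀ - 2 B(P₀, P) P`, the second intersection of the conic `Q = 0` with the line through `P₀`
and `P`. The point `z₀ P - Z P₀` of this line has `z`-coordinate zero, and since `Q(P₀) = 0` the
value of `Q` there is `z₀` times the expression. If the expression vanished, this point would give a
zero of `a u² + b v²`. That binary form is anisotropic, because `-a b` is not a square in the ring,
hence, by integral closedness, not in its fraction field. So `z₀ P = Z P₀`, which forces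
`y₀ X - x₀ Y = 0`.
-/

theorem not_isSquare_neg_of_squarefree {M : Type*} [CommMonoid M] [HasDistribNeg M] {r : M}
    (hr : Squarefree r) (hr' : ¬ IsUnit r) : ¬ IsSquare (-r) := by
  rintro ⟨w, hw⟩
  have hw_unit : IsUnit w := hr w (dvd_neg.mp (dvd_of_eq hw.symm))
  have hr_neg_unit : IsUnit (-r) := hw ▸ hw_unit.mul hw_unit
  exact hr' ((IsUnit.neg_iff r).mp hr_neg_unit)

section IntegrallyClosed

variable {R : Type*} [CommRing R] [IsDomain R] [IsIntegrallyClosed R]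

theorem isSquare_of_isSquare_sq_mul {d v : R} (hv : v ≠ 0) (h : IsSquare (v ^ 2 * d)) :
    IsSquare d := by
  obtain ⟨s, hs⟩ := h
  obtain ⟨w, rfl⟩ : v ∣ s :=
    (IsIntegrallyClosed.pow_dvd_pow_iff two_ne_zero).mp ⟨d, by rw [hs, sq]⟩
  exact ⟨w, mul_left_cancel₀ (pow_ne_zero 2 hv) (by linear_combination hs)⟩

theorem mul_sq_add_mul_sq_eq_zero_iff {a b u v : R} (hab : ¬ IsSquare (-(a * b))) :
    a * u ^ 2 + b * v ^ 2 = 0 ↔ u = 0 ∧ v = 0 := by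
  refine ⟨fun h ↦ ?_, by rintro ⟨rfl, rfl⟩; simp⟩
  have ha : a ≠ 0 := by
    rintro rfl
    simp at hab
  have hv : v = 0 := by
    by_contra hv
    exact hab (isSquare_of_isSquare_sq_mul hv ⟨a * u, by linear_combination -a * h⟩)
  subst hv
  exact ⟨by simpa [ha] using h, rfl⟩

theorem new_z_ne_zero_general {a b c x₀ y₀ z₀ X Y Z : R} (hab : ¬ IsSquare (-(a * b)))
    (hz₀ : z₀ ≠ 0) (hsol : a * x₀ ^ 2 + b * y₀ ^ 2 + c * z₀ ^ 2 = 0)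
    (hXY : y₀ * X - x₀ * Y ≠ 0) :
    z₀ * (a * X ^ 2 + b * Y ^ 2 + c * Z ^ 2) -
      2 * Z * (a * x₀ * X + b * y₀ * Y + c * z₀ * Z) ≠ 0 := by
  intro h
  have hform : a * (z₀ * X - Z * x₀) ^ 2 + b * (z₀ * Y - Z * y₀) ^ 2 = 0 := by
    linear_combination z₀ * h + Z ^ 2 * hsol
  obtain ⟨hx, hy⟩ := (mul_sq_add_mul_sq_eq_zero_iff hab).mp hform
  have hprop : z₀ * (y₀ * X - x₀ * Y) = 0 := by
    linear_combination y₀ * hx - x₀ * hy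
  exact mul_ne_zero hz₀ hXY hprop

end IntegrallyClosed

/-- The new `z`-coordinate of the descent never vanishes. -/
theorem new_z_ne_zero (a b c x₀ y₀ z₀ X Y Z : ℤ[i])
    (hab : Squarefree (a * b)) (hab' : ¬ IsUnit (a * b))
    (hcz : c * z₀ ≠ 0)
    (hsol : a * x₀ ^ 2 + b * y₀ ^ 2 + c * z₀ ^ 2 = 0)
    (hXY : y₀ * X - x₀ * Y ≠ 0) :
    z₀ * (a * X ^ 2 + b * Y ^ 2 + c * Z ^ 2) -
      2 * Z * (a * x₀ * X + b * y₀ * Y + c * z₀ * Z) ≠ 0 :=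
  new_z_ne_zero_general (not_isSquare_neg_of_squarefree hab hab') (right_ne_zero_of_mul hcz)
    hsol hXY
end

section
/- Let a, b be Gaussian integers such that a·b is squarefree and not a unit. If x and y are Gaussian integers with a·x² + b·y² = 0, then x = 0 and y = 0. -/
local notation "ℤ[i]" => GaussianInt

/-! Multiplying `a x² + b y² = 0` by `b` gives `ab · x² = -(b y)²`. If `x ≠ 0`, the fraction
`b y / x` has square `-ab`, so it is integral over the ring and hence lies in it; thus `ab` is the
negative of a square, and squarefreeness makes it a unit. -/

section IntegrallyClosed

variable {R : Type*} [CommRing R] [IsDomain R] [IsIntegrallyClosed R]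

theorem isUnit_of_squarefree_of_associated_mul_sq_sq {d x z : R} (hd : Squarefree d) (hx : x ≠ 0)
    (h : Associated (d * x ^ 2) (z ^ 2)) : IsUnit d := by
  have hdvd : x ^ 2 ∣ z ^ 2 := (dvd_mul_left _ _).trans h.dvd
  obtain ⟨w, rfl⟩ : x ∣ z := (IsIntegrallyClosed.pow_dvd_pow_iff two_ne_zero).1 hdvd
  have hdw : Associated d (w ^ 2) := by
    rw [mul_pow, mul_comm (x ^ 2)] at h
    exact h.of_mul_right (.refl _) (pow_ne_zero 2 hx)
  have hw : IsUnit w := hd w (sq w ▸ hdw.symm.dvd)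
  exact hdw.symm.isUnit (hw.pow 2)

theorem binary_only_trivial_general {a b x y : R}
    (hab : Squarefree (a * b)) (hab' : ¬ IsUnit (a * b))
    (h : a * x ^ 2 + b * y ^ 2 = 0) : x = 0 ∧ y = 0 := by
  have hx : Associated (a * b * x ^ 2) ((b * y) ^ 2) :=
    ⟨-1, by push_cast; linear_combination -b * h⟩
  have hy : Associated (a * b * y ^ 2) ((a * x) ^ 2) :=
    ⟨-1, by push_cast; linear_combination -a * h⟩
  constructor <;> by_contra hne
  · exact hab' (isUnit_of_squarefree_of_associated_mul_sq_sq hab hne hx)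
  · exact hab' (isUnit_of_squarefree_of_associated_mul_sq_sq hab hne hy)

end IntegrallyClosed

/-- If `a·b` is squarefree and not a unit, the binary equation `a·x² + b·y² = 0` has only the
trivial solution. -/
theorem binary_only_trivial (a b x y : ℤ[i])
    (hab : Squarefree (a * b)) (hab' : ¬ IsUnit (a * b))
    (h : a * x ^ 2 + b * y ^ 2 = 0) :
    x = 0 ∧ y = 0 :=
  binary_only_trivial_general hab hab' h
end
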